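/- Let G = (V,E) be a directed graph with edge costs c : E → {1,...,C}, and disjoint k-element sets X, Y. Fix a cost bound U and let H be the family of all proper sets of k walks from X to Y of total cost at most U (edge costs counted with multiplicity). Let CQ = \sum_{S ∈ H} \prod_{W ∈ S} M_W over a field of characteristic 2, where M_W is the monomial of edge multiplicities of W. Then CQ is not the zero polynomial if and only if there is a proper set of k pairwise vertex-disjoint walks in G of total cost at most U. -/

import Mathlib

set_option autoImplicit false

open scoped Classical

noncomputable section

variable {V : Type*}

/-- The list of edge occurrences of a walk given by its list of vertices. -/
def edgesOf (w : List V) : List (V × V) := w.zip w.tail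

/-- `w` is a walk in the directed graph `E` from the source set `X` to the sink
set `Y`: it has at least two vertices, consecutive vertices are joined by edges,
its first vertex is in `X`, its last vertex is in `Y`, and all intermediate
vertices lie outside `X ∪ Y`. -/
def IsWalk (E : V → V → Prop) (X Y : Set V) (w : List V) : Prop :=
  2 ≤ w.length ∧ w.Chain' E ∧
    (∀ a, w.head? = some a → a ∈ X) ∧
    (∀ b, w.getLast? = some b → b ∈ Y) ∧
    ∀ v ∈ w.tail.dropLast, v ∉ X ∧ v ∉ Y

/-- A proper (indexed) set of `k` walks: each member is a walk from `X` to `Y`,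
and the walks have pairwise distinct start vertices and pairwise distinct end
vertices. -/
def Proper (E : V → V → Prop) (X Y : Set V) {k : ℕ} (S : Fin k → List V) : Prop :=
  (∀ i, IsWalk E X Y (S i)) ∧
    Function.Injective (fun i => (S i).head?) ∧
    Function.Injective (fun i => (S i).getLast?)

/-- The walks `S i` are pairwise vertex-disjoint. -/
def Disjointly {k : ℕ} (S : Fin k → List V) : Prop :=
  ∀ i j, i ≠ j → ∀ v, v ∈ S i → v ∉ S j

/-- The total length of an indexed set of walks (each walk on `m` vertices has
length `m - 1`). -/
def totalLen {k : ℕ} (S : Fin k → List V) : ℕ := ∑ i, ((S i).length - 1)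


/-- A proper (unordered) set of `k` walks. -/
def ProperSet (E : V → V → Prop) (X Y : Set V) (k : ℕ) (S : Finset (List V)) : Prop :=
  S.card = k ∧ (∀ w ∈ S, IsWalk E X Y w) ∧
    (∀ w ∈ S, ∀ w' ∈ S, w ≠ w' → w.head? ≠ w'.head? ∧ w.getLast? ≠ w'.getLast?)

/-- The monomial `M_W` of a walk `W`. -/
def walkMonomial (F : Type*) [Field F] (w : List V) : MvPolynomial (V × V) F :=
  (edgesOf w).map (fun e => MvPolynomial.X e) |>.prod

/-- The cost of a walk: the sum of the costs of its edge occurrences. -/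
def walkCost (c : V × V → ℕ) (w : List V) : ℕ := ((edgesOf w).map c).sum

/-!
If the loop erasures of the walks of a proper set are not pairwise disjoint, single out a canonical
crossing: with the walks ordered by their end vertices, take the first walk whose loop erasure meets
a later walk, the last vertex of the loop erasure at which this happens, and the first later walk
through that vertex, cut where it visits the vertex for the first time. Swapping suffixes there
gives another proper set with the same edge multiset, hence the same cost and the same monomial, and
the same canonical crossing. This is an involution, without fixed points because start vertices are
distinct, so such sets cancel in characteristic two. In the absence of disjoint walks every set is
of this kind, because loop erasure does not increase the cost.

Conversely, loop erase the walks of a disjoint set. Every edge multiset determines which edges are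
used, and on disjoint paths each vertex has at most one outgoing edge, so following edges from `X`
recovers the paths: no other proper set has the same monomial, and its coefficient is one.
-/

section Edges

theorem edgesOf_append_cons (P : List V) (v : V) (Q : List V) :
    edgesOf (P ++ v :: Q) = edgesOf (P ++ [v]) ++ edgesOf (v :: Q) := by
  induction P with
  | nil => rfl
  | cons a P ih => cases P <;> simp_all [edgesOf]

theorem edgesOf_sublist_of_suffix {l L : List V} (h : l <:+ L) :
    (edgesOf l).Sublist (edgesOf L) := by
  obtain ⟨P, rfl⟩ := h
  cases l with
  | nil => exact List.nil_sublist _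
  | cons v Q => exact edgesOf_append_cons P v Q ▸ List.sublist_append_right _ _

theorem isChain_iff_forall_mem_edgesOf {R : V → V → Prop} {w : List V} :
    w.IsChain R ↔ ∀ e ∈ edgesOf w, R e.1 e.2 := by
  induction w with
  | nil => simp [edgesOf]
  | cons a l ih => cases l <;> simp_all [edgesOf]

theorem fst_mem_of_mem_edgesOf {w : List V} {e : V × V} (he : e ∈ edgesOf w) : e.1 ∈ w :=
  (List.of_mem_zip he).1

theorem map_snd_edgesOf (w : List V) : (edgesOf w).map Prod.snd = w.tail :=
  List.map_snd_zip (by simp)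

theorem map_fst_edgesOf (w : List V) : (edgesOf w).map Prod.fst = w.dropLast := by
  induction w with
  | nil => rfl
  | cons a l ih => cases l <;> simp_all [edgesOf]

theorem rightUnique_mem_edgesOf {w : List V} (hw : w.Nodup) :
    Relator.RightUnique fun u v => (u, v) ∈ edgesOf w := by
  induction w with
  | nil => simp [Relator.RightUnique, edgesOf]
  | cons a l ih =>
    have hl := ih hw.of_cons
    have ha : ∀ v, (a, v) ∉ edgesOf l := fun v h => hw.notMem (fst_mem_of_mem_edgesOf h)
    intro u v v' h h'
    cases l <;> grind [Relator.RightUnique, edgesOf]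

/-- The product of `f` over the edge occurrences of a walk. For `f = MvPolynomial.X` this is the
monomial of the walk. The cost of a walk is the additive version `edgeSum`. -/
@[to_additive]
def edgeProd {M : Type*} [CommMonoid M] (f : V × V → M) (w : List V) : M :=
  ((edgesOf w).map f).prod

@[to_additive]
theorem edgeProd_append_cons {M : Type*} [CommMonoid M] (f : V × V → M) (P : List V) (v : V)
    (Q : List V) : edgeProd f (P ++ v :: Q) = edgeProd f (P ++ [v]) * edgeProd f (v :: Q) := by
  simp only [edgeProd, edgesOf_append_cons P v Q, List.map_append, List.prod_append]

@[to_additive]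
theorem edgeProd_swap_suffix {M : Type*} [CommMonoid M] (f : V × V → M) (P P' : List V) (v : V)
    (Q Q' : List V) : edgeProd f (P' ++ v :: Q) * edgeProd f (P ++ v :: Q') =
      edgeProd f (P ++ v :: Q) * edgeProd f (P' ++ v :: Q') := by
  rw [edgeProd_append_cons f P, edgeProd_append_cons f P', edgeProd_append_cons f P v Q,
    edgeProd_append_cons f P' v Q', mul_mul_mul_comm, mul_comm (edgeProd f (P' ++ [v])),
    mul_mul_mul_comm]

end Edges

section LoopErasure

theorem cons_rtakeWhile_ne_suffix (a : V) (l : List V) :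
    a :: l.rtakeWhile (· ≠ a) <:+ a :: l := by
  induction l using List.reverseRecOn with
  | nil => simp
  | append_singleton l b ih =>
    rw [List.rtakeWhile_concat]
    split_ifs with h
    · exact List.suffix_append_self_iff.2 ih
    · obtain rfl : b = a := by simpa using h
      exact ⟨b :: l, by simp⟩

theorem rtakeWhile_append_of_forall {p : V → Bool} (l : List V) {t : List V}
    (h : ∀ u ∈ t, p u) : (l ++ t).rtakeWhile p = l.rtakeWhile p ++ t := by
  rw [List.rtakeWhile, List.reverse_append, List.takeWhile_append_of_pos (by simpa using h)]
  simp [List.rtakeWhile]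

/-- Loop erasure, from the end of the walk: a vertex `a` put in front of an already erased walk
closes a loop exactly if it occurs there, and then everything up to that occurrence is cut out. -/
def loopErase : List V → List V
  | [] => []
  | a :: l => a :: (loopErase l).rtakeWhile (· ≠ a)

theorem loopErase_cons (a : V) (l : List V) :
    loopErase (a :: l) = a :: (loopErase l).rtakeWhile (· ≠ a) := rfl

theorem loopErase_cons_suffix (a : V) (l : List V) : loopErase (a :: l) <:+ a :: loopErase l :=
  cons_rtakeWhile_ne_suffix a _

theorem notMem_rtakeWhile_ne (a : V) (l : List V) : a ∉ l.rtakeWhile (· ≠ a) := fun h => by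
  simpa using List.mem_rtakeWhile_imp h

theorem loopErase_sublist (w : List V) : (loopErase w).Sublist w := by
  induction w with
  | nil => exact List.Sublist.refl _
  | cons a l ih => exact ((List.rtakeWhile_suffix _ _).sublist.trans ih).cons_cons a

theorem nodup_loopErase (w : List V) : (loopErase w).Nodup := by
  induction w with
  | nil => exact List.nodup_nil
  | cons a l ih =>
    exact List.nodup_cons.2
      ⟨notMem_rtakeWhile_ne a _, ih.sublist (List.rtakeWhile_suffix _ _).sublist⟩

theorem head?_loopErase (w : List V) : (loopErase w).head? = w.head? := by
  cases w <;> rfl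

theorem getLast?_loopErase (w : List V) : (loopErase w).getLast? = w.getLast? := by
  induction w with
  | nil => rfl
  | cons a l ih =>
    obtain ⟨D, hD⟩ := loopErase_cons_suffix a l
    rw [List.getLast?_cons, ← ih, ← List.getLast?_cons, ← hD, loopErase_cons,
      List.getLast?_append_cons]

theorem edgesOf_loopErase_sublist (w : List V) : (edgesOf (loopErase w)).Sublist (edgesOf w) := by
  induction w with
  | nil => exact List.Sublist.refl _
  | cons a l ih =>
    refine (edgesOf_sublist_of_suffix (loopErase_cons_suffix a l)).trans ?_
    cases l with
    | nil => exact List.Sublist.refl _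
    | cons b l => exact ih.cons_cons (a, b)

theorem edgeSum_loopErase_le {M : Type*} [AddCommMonoid M] [PartialOrder M] [IsOrderedAddMonoid M]
    {c : V × V → M} {w : List V} (hc : ∀ e ∈ edgesOf w, 0 ≤ c e) :
    edgeSum c (loopErase w) ≤ edgeSum c w :=
  ((edgesOf_loopErase_sublist w).map c).sum_le_sum (List.forall_mem_map.2 hc)

theorem loopErase_suffix_append {P Z : List V} (h : P.Disjoint (loopErase Z)) :
    loopErase Z <:+ loopErase (P ++ Z) := by
  induction P with
  | nil => exact List.suffix_rfl
  | cons p P ih =>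
    rw [List.disjoint_cons_left] at h
    obtain ⟨A, hA⟩ := ih h.2
    refine ⟨p :: A.rtakeWhile (· ≠ p), ?_⟩
    rw [List.cons_append, List.cons_append, loopErase_cons, ← hA, rtakeWhile_append_of_forall]
    exact fun u hu => by simpa using ne_of_mem_of_not_mem hu h.1

theorem exists_eq_append_of_mem_loopErase {w : List V} {v : V} (hv : v ∈ loopErase w) :
    ∃ P Q, w = P ++ v :: Q ∧ P.Disjoint (loopErase (v :: Q)) := by
  induction w with
  | nil => simp [loopErase] at hv
  | cons a l ih =>
    rcases List.mem_cons.1 hv with rfl | hv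
    · exact ⟨[], l, rfl, List.disjoint_nil_left _⟩
    · have hsuffix := List.rtakeWhile_suffix (· ≠ a) (loopErase l)
      obtain ⟨P, Q, rfl, hPQ⟩ := ih (hsuffix.subset hv)
      refine ⟨a :: P, Q, rfl, List.disjoint_cons_left.2 ⟨fun ha => ?_, hPQ⟩⟩
      have hle : loopErase (v :: Q) <:+ (loopErase (P ++ v :: Q)).rtakeWhile (· ≠ a) := by
        rcases List.suffix_or_suffix_of_suffix (loopErase_suffix_append hPQ) hsuffix with h | h
        · exact h
        · rcases List.suffix_cons_iff.1 h with h | h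
          · exact h ▸ List.suffix_rfl
          · exact absurd (h.subset hv) (notMem_rtakeWhile_ne v _)
      exact notMem_rtakeWhile_ne a _ (hle.subset ha)

theorem append_cons_inj_of_notMem_left {P₁ P₂ Q₁ Q₂ : List V} {v : V} (h₁ : v ∉ P₁) (h₂ : v ∉ P₂)
    (h : P₁ ++ v :: Q₁ = P₂ ++ v :: Q₂) : P₁ = P₂ ∧ Q₁ = Q₂ := by
  rcases List.append_eq_append_iff.1 h with ⟨C, hP, hQ⟩ | ⟨C, hP, hQ⟩ <;> cases C <;> grind

theorem exists_last_of_exists_mem {T : V → Prop} {l : List V} (h : ∃ u ∈ l, T u) :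
    ∃ A v B, l = A ++ v :: B ∧ T v ∧ ∀ u ∈ B, ¬ T u := by
  induction l with
  | nil => simp at h
  | cons a l ih =>
    by_cases hl : ∃ u ∈ l, T u
    · obtain ⟨A, v, B, rfl, hv, hB⟩ := ih hl
      exact ⟨a :: A, v, B, rfl, hv, hB⟩
    · push Not at hl
      exact ⟨[], a, l, rfl, by grind, hl⟩

/-- Among the vertices of the loop erasure of `P ++ v :: Q`, the last one satisfying `T` is `v`, and
the displayed occurrence of `v` is the one at which `loopErase` leaves `v` for the last time. -/
structure IsLastHit (T : V → Prop) (P : List V) (v : V) (Q : List V) : Prop where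
  disjoint : P.Disjoint (loopErase (v :: Q))
  hit : T v
  tail : ∀ u ∈ (loopErase (v :: Q)).tail, ¬ T u

namespace IsLastHit

variable {T : V → Prop} {P P₁ P₂ Q Q₁ Q₂ : List V} {v v₁ v₂ : V}

theorem notMem (h : IsLastHit T P v Q) : v ∉ P := fun hv => h.disjoint hv List.mem_cons_self

theorem mem_loopErase (h : IsLastHit T P v Q) : v ∈ loopErase (P ++ v :: Q) :=
  (loopErase_suffix_append h.disjoint).subset List.mem_cons_self

theorem vertex_eq_of_suffix (h₁ : IsLastHit T P₁ v₁ Q₁) (h₂ : IsLastHit T P₂ v₂ Q₂)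
    (h : loopErase (v₁ :: Q₁) <:+ loopErase (v₂ :: Q₂)) : v₁ = v₂ := by
  rcases List.suffix_cons_iff.1 h with h | h
  · exact (List.cons.inj h).1
  · exact absurd h₁.hit (h₂.tail v₁ (h.subset List.mem_cons_self))

theorem unique (h₁ : IsLastHit T P₁ v₁ Q₁) (h₂ : IsLastHit T P₂ v₂ Q₂)
    (h : P₁ ++ v₁ :: Q₁ = P₂ ++ v₂ :: Q₂) : P₁ = P₂ ∧ v₁ = v₂ ∧ Q₁ = Q₂ := by
  have hv : v₁ = v₂ := by
    have hsuffix₁ := h ▸ loopErase_suffix_append h₁.disjoint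
    rcases List.suffix_or_suffix_of_suffix hsuffix₁ (loopErase_suffix_append h₂.disjoint) with h | h
    · exact vertex_eq_of_suffix h₁ h₂ h
    · exact (vertex_eq_of_suffix h₂ h₁ h).symm
  subst hv
  exact (append_cons_inj_of_notMem_left h₁.notMem h₂.notMem h).imp_right fun hQ => ⟨rfl, hQ⟩

end IsLastHit

theorem exists_isLastHit {T : V → Prop} {w : List V} (h : ∃ u ∈ loopErase w, T u) :
    ∃ P v Q, w = P ++ v :: Q ∧ IsLastHit T P v Q := by
  obtain ⟨A, v, B, hw, hv, hB⟩ := exists_last_of_exists_mem h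
  obtain ⟨P, Q, rfl, hPQ⟩ := exists_eq_append_of_mem_loopErase (w := w) (v := v) (by simp [hw])
  obtain ⟨D, hD⟩ := loopErase_suffix_append hPQ
  have hnodup := nodup_loopErase (P ++ v :: Q)
  have hnotMem : ∀ {C R : List V}, loopErase (P ++ v :: Q) = C ++ v :: R → v ∉ C := fun h => by
    grind
  have htail : (loopErase (v :: Q)).tail = B :=
    (append_cons_inj_of_notMem_left (hnotMem hD.symm) (hnotMem hw) (hD.trans hw)).2
  exact ⟨P, v, Q, rfl, hPQ, hv, htail ▸ hB⟩

end LoopErasure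

section Walks

variable {E : V → V → Prop} {X Y : Set V} {k : ℕ}

/-- The edges of `E` that a walk from `X` to `Y` may use: since its intermediate vertices avoid
`X ∪ Y`, it neither leaves `Y` nor enters `X`. -/
def WalkStep (E : V → V → Prop) (X Y : Set V) (u v : V) : Prop := E u v ∧ u ∉ Y ∧ v ∉ X

theorem isChain_walkStep_iff {w : List V} :
    w.IsChain (WalkStep E X Y) ↔
      w.IsChain E ∧ (∀ u ∈ w.dropLast, u ∉ Y) ∧ ∀ u ∈ w.tail, u ∉ X := by
  simp only [isChain_iff_forall_mem_edgesOf, ← map_fst_edgesOf, ← map_snd_edgesOf,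
    List.forall_mem_map, WalkStep]
  grind

theorem isWalk_iff (hXY : Disjoint X Y) {w : List V} :
    IsWalk E X Y w ↔ (∃ a ∈ w.head?, a ∈ X) ∧ (∃ b ∈ w.getLast?, b ∈ Y) ∧
      w.IsChain (WalkStep E X Y) := by
  have hdisj : ∀ {u}, u ∈ X → u ∉ Y := fun h => Set.disjoint_left.1 hXY h
  rw [isChain_walkStep_iff]
  rcases w with _ | ⟨a, l⟩
  · simp [IsWalk]
  rcases List.eq_nil_or_concat' l with rfl | ⟨m, b, rfl⟩
  · simpa [IsWalk] using hdisj
  · have hhead : (a :: (m ++ [b])).head? = some a := rfl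
    have hlast : (a :: (m ++ [b])).getLast? = some b := List.getLast?_concat (l := a :: m)
    have hdrop : (a :: (m ++ [b])).dropLast = a :: m := List.dropLast_concat (l₁ := a :: m)
    have hinner : (a :: (m ++ [b])).tail.dropLast = m := List.dropLast_concat
    rw [IsWalk, hhead, hlast, hdrop, hinner]
    change 2 ≤ _ ∧ List.IsChain E _ ∧ _ ↔ _
    simp only [List.tail_cons, Option.mem_def, Option.some.injEq, exists_eq_left', forall_eq',
      List.length_cons, List.length_append, List.forall_mem_cons, List.forall_mem_append,
      List.not_mem_nil, IsEmpty.forall_iff, implies_true, and_true, forall_and]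
    have hlength : 2 ≤ m.length + (0 + 1) + 1 := by omega
    have hb : b ∈ Y → b ∉ X := fun hb hX => hdisj hX hb
    tauto

theorem head?_append_cons_congr (P : List V) (v : V) (Q Q' : List V) :
    (P ++ v :: Q).head? = (P ++ v :: Q').head? := by
  simp [List.head?_append]

theorem IsWalk.append_cons (hXY : Disjoint X Y) {P P' Q Q' : List V} {v : V}
    (h : IsWalk E X Y (P ++ v :: Q)) (h' : IsWalk E X Y (P' ++ v :: Q')) :
    IsWalk E X Y (P' ++ v :: Q) := by
  rw [isWalk_iff hXY, List.isChain_split] at *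
  rw [head?_append_cons_congr P' v Q Q', List.getLast?_append_cons P',
    ← List.getLast?_append_cons P]
  exact ⟨h'.1, h.2.1, h'.2.2.1, h.2.2.2⟩

theorem IsWalk.loopErase (hXY : Disjoint X Y) {w : List V} (hw : IsWalk E X Y w) :
    IsWalk E X Y (loopErase w) := by
  rw [isWalk_iff hXY] at *
  rw [head?_loopErase, getLast?_loopErase]
  refine ⟨hw.1, hw.2.1, isChain_iff_forall_mem_edgesOf.2 fun e he => ?_⟩
  exact isChain_iff_forall_mem_edgesOf.1 hw.2.2 e ((edgesOf_loopErase_sublist w).subset he)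

theorem properSet_iff {S : Finset (List V)} :
    ProperSet E X Y k S ↔ S.card = k ∧ (∀ w ∈ S, IsWalk E X Y w) ∧
      Set.InjOn List.head? (S : Set (List V)) ∧ Set.InjOn List.getLast? (S : Set (List V)) := by
  simp only [ProperSet, Set.InjOn, Finset.mem_coe]
  grind

namespace ProperSet

variable {S : Finset (List V)}

theorem injOn_head? (hS : ProperSet E X Y k S) : Set.InjOn List.head? (S : Set (List V)) :=
  (properSet_iff.1 hS).2.2.1

theorem injOn_getLast? (hS : ProperSet E X Y k S) : Set.InjOn List.getLast? (S : Set (List V)) :=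
  (properSet_iff.1 hS).2.2.2

theorem injOn_loopErase (hS : ProperSet E X Y k S) :
    Set.InjOn loopErase (S : Set (List V)) := fun w hw w' hw' h =>
  hS.injOn_head? hw hw' (by rw [← head?_loopErase w, h, head?_loopErase])

theorem image_loopErase (hXY : Disjoint X Y) (hS : ProperSet E X Y k S) :
    ProperSet E X Y k (S.image loopErase) := by
  refine properSet_iff.2 ⟨?_, ?_, ?_, ?_⟩
  · rw [Finset.card_image_of_injOn hS.injOn_loopErase, hS.1]
  · exact Finset.forall_mem_image.2 fun w hw => (hS.2.1 w hw).loopErase hXY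
  · rw [Finset.coe_image]
    exact Set.InjOn.image_of_comp (hS.injOn_head?.congr fun w _ => (head?_loopErase w).symm)
  · rw [Finset.coe_image]
    exact Set.InjOn.image_of_comp (hS.injOn_getLast?.congr fun w _ => (getLast?_loopErase w).symm)

theorem sum_image_loopErase_le {M : Type*} [AddCommMonoid M] [PartialOrder M]
    [IsOrderedAddMonoid M] {c : V × V → M} (hc : ∀ u v, E u v → 0 ≤ c (u, v))
    (hS : ProperSet E X Y k S) :
    ∑ w ∈ S.image loopErase, edgeSum c w ≤ ∑ w ∈ S, edgeSum c w := by
  rw [Finset.sum_image hS.injOn_loopErase]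
  refine Finset.sum_le_sum fun w hw => edgeSum_loopErase_le fun e he => hc e.1 e.2 ?_
  exact isChain_iff_forall_mem_edgesOf.1 (hS.2.1 w hw).2.1 e he

end ProperSet

theorem pairwise_disjoint_image_loopErase {S : Finset (List V)}
    (hS : (S : Set (List V)).Pairwise fun w w' => (loopErase w).Disjoint (loopErase w')) :
    (S.image loopErase : Set (List V)).Pairwise List.Disjoint := by
  rw [Finset.coe_image]
  exact Set.Pairwise.image (hS.imp fun _ _ h => h)

end Walks

section Crossing

/-- The position of the end vertex of a walk in a linear order, unaffected by exchanging initial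
segments. Cardinals only serve as a linear order into which every type embeds. -/
def endKey (w : List V) : Cardinal := embeddingToCardinal w.getLast?

theorem endKey_inj {w w' : List V} : endKey w = endKey w' ↔ w.getLast? = w'.getLast? :=
  embeddingToCardinal.injective.eq_iff

/-- `u` lies on a walk of `S` that comes after `κ` in the order of the end vertices. -/
def OnLater (S : Finset (List V)) (κ : Cardinal) (u : V) : Prop :=
  ∃ z ∈ S, κ < endKey z ∧ u ∈ z

/-- Data for a set of walks two of which meet: the two walks are split at an occurrence of a common
vertex, and `rest` holds the other walks. -/
@[ext]
structure Crossing (V : Type*) where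
  fstInit : List V
  sndInit : List V
  vertex : V
  fstTail : List V
  sndTail : List V
  rest : Finset (List V)

namespace Crossing

variable (x : Crossing V)

/-- The first of the two crossing walks. -/
def fst : List V := x.fstInit ++ x.vertex :: x.fstTail

/-- The second of the two crossing walks. -/
def snd : List V := x.sndInit ++ x.vertex :: x.sndTail

/-- The set of walks underlying a crossing. -/
def walks : Finset (List V) := insert x.fst (insert x.snd x.rest)

/-- The suffix swap at the common vertex. It is encoded as the exchange of the initial segments, so
that `fst` and `snd` keep their end vertices. -/
def swap : Crossing V := { x with fstInit := x.sndInit, sndInit := x.fstInit }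

variable {x}

theorem swap_swap : x.swap.swap = x := rfl

theorem head?_swap_fst : x.swap.fst.head? = x.snd.head? := head?_append_cons_congr _ _ _ _

theorem head?_swap_snd : x.swap.snd.head? = x.fst.head? := head?_append_cons_congr _ _ _ _

theorem getLast?_swap_fst : x.swap.fst.getLast? = x.fst.getLast? :=
  (List.getLast?_append_cons _ _ _).trans (List.getLast?_append_cons _ _ _).symm

theorem getLast?_swap_snd : x.swap.snd.getLast? = x.snd.getLast? :=
  (List.getLast?_append_cons _ _ _).trans (List.getLast?_append_cons _ _ _).symm

theorem endKey_swap_fst : endKey x.swap.fst = endKey x.fst := endKey_inj.2 getLast?_swap_fst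

theorem endKey_swap_snd : endKey x.swap.snd = endKey x.snd := endKey_inj.2 getLast?_swap_snd

theorem mem_swap_fst_or_mem_swap_snd {u : V} :
    u ∈ x.swap.fst ∨ u ∈ x.swap.snd ↔ u ∈ x.fst ∨ u ∈ x.snd := by
  simp only [fst, snd, swap, List.mem_append]
  tauto

theorem mem_walks {z : List V} : z ∈ x.walks ↔ z = x.fst ∨ z = x.snd ∨ z ∈ x.rest := by
  simp only [walks, Finset.mem_insert]

theorem fst_mem_walks : x.fst ∈ x.walks := mem_walks.2 (.inl rfl)

theorem snd_mem_walks : x.snd ∈ x.walks := mem_walks.2 (.inr (.inl rfl))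

theorem mem_walks_of_mem_rest {z : List V} (hz : z ∈ x.rest) : z ∈ x.walks :=
  mem_walks.2 (.inr (.inr hz))

theorem vertex_mem_snd : x.vertex ∈ x.snd := List.mem_append_right _ List.mem_cons_self

theorem onLater_walks {κ : Cardinal} {u : V} :
    OnLater x.walks κ u ↔ (κ < endKey x.fst ∧ u ∈ x.fst) ∨ (κ < endKey x.snd ∧ u ∈ x.snd) ∨
      OnLater x.rest κ u := by
  simp only [OnLater, mem_walks, or_and_right, exists_or, exists_eq_left]

/-- The end vertices of `fst` and `snd` differ from each other and from those of the walks in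
`rest`. In particular `fst` and `snd` do not belong to `rest`. -/
structure IsSeparated (x : Crossing V) : Prop where
  fst_ne_snd : endKey x.fst ≠ endKey x.snd
  ne_fst : ∀ z ∈ x.rest, endKey z ≠ endKey x.fst
  ne_snd : ∀ z ∈ x.rest, endKey z ≠ endKey x.snd

namespace IsSeparated

theorem swap (h : x.IsSeparated) : x.swap.IsSeparated where
  fst_ne_snd := by simpa only [endKey_swap_fst, endKey_swap_snd] using h.fst_ne_snd
  ne_fst := fun z hz => endKey_swap_fst (x := x) ▸ h.ne_fst z hz
  ne_snd := fun z hz => endKey_swap_snd (x := x) ▸ h.ne_snd z hz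

theorem snd_notMem_rest (h : x.IsSeparated) : x.snd ∉ x.rest := fun hx => h.ne_snd _ hx rfl

theorem fst_notMem_insert (h : x.IsSeparated) : x.fst ∉ insert x.snd x.rest := by
  rw [Finset.mem_insert, not_or]
  exact ⟨fun hx => h.fst_ne_snd (congrArg endKey hx), fun hx => h.ne_fst _ hx rfl⟩

theorem erase_erase (h : x.IsSeparated) : (x.walks.erase x.fst).erase x.snd = x.rest := by
  rw [walks, Finset.erase_insert h.fst_notMem_insert, Finset.erase_insert h.snd_notMem_rest]

theorem card_walks (h : x.IsSeparated) : x.walks.card = x.rest.card + 2 := by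
  rw [walks, Finset.card_insert_of_notMem h.fst_notMem_insert,
    Finset.card_insert_of_notMem h.snd_notMem_rest]

@[to_additive]
theorem prod_walks {M : Type*} [CommMonoid M] (h : x.IsSeparated) (g : List V → M) :
    ∏ w ∈ x.walks, g w = g x.fst * g x.snd * ∏ w ∈ x.rest, g w := by
  rw [walks, Finset.prod_insert h.fst_notMem_insert, Finset.prod_insert h.snd_notMem_rest,
    mul_assoc]

@[to_additive]
theorem prod_edgeProd_swap {M : Type*} [CommMonoid M] (h : x.IsSeparated) (f : V × V → M) :
    ∏ w ∈ x.swap.walks, edgeProd f w = ∏ w ∈ x.walks, edgeProd f w := by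
  rw [h.prod_walks, h.swap.prod_walks]
  exact congrArg (· * _) (edgeProd_swap_suffix f _ _ _ _ _)

theorem properSet_swap {E : V → V → Prop} {X Y : Set V} {k : ℕ} (h : x.IsSeparated)
    (hXY : Disjoint X Y) (hx : ProperSet E X Y k x.walks) : ProperSet E X Y k x.swap.walks := by
  have hcard : x.swap.walks.card = x.walks.card := by rw [h.card_walks, h.swap.card_walks]; rfl
  have hhead : x.swap.walks.image List.head? = x.walks.image List.head? := by
    rw [walks, walks, Finset.image_insert, Finset.image_insert, head?_swap_fst, head?_swap_snd,
      Finset.insert_comm, Finset.image_insert, Finset.image_insert]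
    rfl
  have hlast : x.swap.walks.image List.getLast? = x.walks.image List.getLast? := by
    rw [walks, walks, Finset.image_insert, Finset.image_insert, getLast?_swap_fst,
      getLast?_swap_snd, Finset.image_insert, Finset.image_insert]
    rfl
  obtain ⟨hk, hwalk, hinj_head, hinj_last⟩ := properSet_iff.1 hx
  have hfst := hwalk x.fst fst_mem_walks
  have hsnd := hwalk x.snd snd_mem_walks
  refine properSet_iff.2 ⟨hcard.trans hk, fun z hz => ?_, ?_, ?_⟩
  · rcases mem_walks.1 hz with rfl | rfl | hz
    · exact hfst.append_cons hXY hsnd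
    · exact hsnd.append_cons hXY hfst
    · exact hwalk z (mem_walks_of_mem_rest hz)
  · rw [← Finset.card_image_iff, hhead, Finset.card_image_of_injOn hinj_head, hcard]
  · rw [← Finset.card_image_iff, hlast, Finset.card_image_of_injOn hinj_last, hcard]

end IsSeparated

/-- The crossing of a set of walks at which suffixes are swapped: `fst` is the first walk whose
loop erasure meets a later walk, `vertex` the last vertex at which it does, and `snd` the first
later walk through `vertex`, cut at its first visit. Looking at the loop erasure of `fst` but at
all vertices of the later walks makes this choice invariant under the swap. -/
structure IsCanonical (x : Crossing V) : Prop extends x.IsSeparated where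
  lt : endKey x.fst < endKey x.snd
  lastHit : IsLastHit (OnLater x.walks (endKey x.fst)) x.fstInit x.vertex x.fstTail
  notMem : x.vertex ∉ x.sndInit
  least : ∀ z ∈ x.walks, endKey x.fst < endKey z → x.vertex ∈ z → endKey x.snd ≤ endKey z
  before : ∀ z ∈ x.walks, endKey z < endKey x.fst →
    ∀ u ∈ loopErase z, ¬ OnLater x.walks (endKey z) u

theorem onLater_swap_walks {κ : Cardinal} {u : V} (hfst : κ < endKey x.fst)
    (hsnd : κ < endKey x.snd) : OnLater x.swap.walks κ u ↔ OnLater x.walks κ u := by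
  rw [onLater_walks, onLater_walks, endKey_swap_fst, endKey_swap_snd]
  simp only [hfst, hsnd, true_and, ← or_assoc, mem_swap_fst_or_mem_swap_snd]
  rfl

namespace IsCanonical

variable {y : Crossing V}

theorem onLater_of_mem_snd (h : x.IsCanonical) {u : V} (hu : u ∈ x.snd) :
    OnLater x.walks (endKey x.fst) u :=
  ⟨x.snd, snd_mem_walks, h.lt, hu⟩

theorem isLastHit_swap (h : x.IsCanonical) :
    IsLastHit (OnLater x.swap.walks (endKey x.swap.fst)) x.sndInit x.vertex x.fstTail := by
  rw [endKey_swap_fst]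
  refine ⟨fun u huP hu => ?_, ?_, fun u hu hlater => ?_⟩
  · rcases List.mem_cons.1 hu with rfl | hu
    · exact h.notMem huP
    · exact h.lastHit.tail u hu (h.onLater_of_mem_snd (List.mem_append_left _ huP))
  · exact ⟨x.swap.snd, snd_mem_walks, endKey_swap_snd.symm ▸ h.lt,
      List.mem_append_right _ List.mem_cons_self⟩
  · rcases onLater_walks.1 hlater with ⟨hlt, -⟩ | ⟨-, hu'⟩ | hrest
    · exact hlt.ne' endKey_swap_fst
    · rcases List.mem_append.1 hu' with hu' | hu'
      · exact h.lastHit.disjoint hu' (List.mem_of_mem_tail hu)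
      · exact h.lastHit.tail u hu (h.onLater_of_mem_snd (List.mem_append_right _ hu'))
    · exact h.lastHit.tail u hu (onLater_walks.2 (.inr (.inr hrest)))

theorem swap (h : x.IsCanonical) : x.swap.IsCanonical where
  toIsSeparated := h.toIsSeparated.swap
  lt := by simpa only [endKey_swap_fst, endKey_swap_snd] using h.lt
  lastHit := h.isLastHit_swap
  notMem := h.lastHit.notMem
  least z hz hlt hv := by
    rw [endKey_swap_fst] at hlt
    rcases mem_walks.1 hz with rfl | rfl | hz
    · exact absurd endKey_swap_fst hlt.ne'
    · exact le_rfl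
    · exact endKey_swap_snd.trans_le (h.least z (mem_walks_of_mem_rest hz) hlt hv)
  before z hz hlt u hu := by
    rw [endKey_swap_fst] at hlt
    rw [onLater_swap_walks hlt (hlt.trans h.lt)]
    rcases mem_walks.1 hz with rfl | rfl | hz
    · exact absurd endKey_swap_fst hlt.ne
    · exact absurd (endKey_swap_snd.symm.trans_lt hlt) h.lt.not_gt
    · exact h.before z (mem_walks_of_mem_rest hz) hlt u hu

theorem unique (hx : x.IsCanonical) (hy : y.IsCanonical)
    (hinj : Set.InjOn List.getLast? (x.walks : Set (List V))) (hxy : x.walks = y.walks) :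
    x = y := by
  have hkey : ∀ {z z'}, z ∈ x.walks → z' ∈ x.walks → endKey z = endKey z' → z = z' :=
    fun hz hz' h => hinj hz hz' (endKey_inj.1 h)
  have hyfst : y.fst ∈ x.walks := hxy ▸ fst_mem_walks
  have hxfst : x.fst ∈ y.walks := hxy ▸ fst_mem_walks
  have hfst : x.fst = y.fst := by
    refine hkey fst_mem_walks hyfst (le_antisymm ?_ ?_) <;> refine not_lt.1 fun hlt => ?_
    · exact hx.before y.fst hyfst hlt _ hy.lastHit.mem_loopErase (hxy ▸ hy.lastHit.hit)
    · exact hy.before x.fst hxfst hlt _ hx.lastHit.mem_loopErase (hxy ▸ hx.lastHit.hit)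
  obtain ⟨hInit, hvertex, hTail⟩ := hx.lastHit.unique (by rw [hxy, hfst]; exact hy.lastHit) hfst
  have hsnd : x.snd = y.snd := by
    refine hkey snd_mem_walks (hxy ▸ snd_mem_walks) (le_antisymm ?_ ?_)
    · exact hx.least y.snd (hxy ▸ snd_mem_walks) (hfst ▸ hy.lt) (hvertex ▸ vertex_mem_snd)
    · exact hy.least x.snd (hxy ▸ snd_mem_walks) (hfst ▸ hx.lt) (hvertex ▸ vertex_mem_snd)
  have hrest : x.rest = y.rest := by
    rw [← hx.erase_erase, ← hy.erase_erase, hxy, hfst, hsnd]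
  obtain ⟨hInit', hTail'⟩ : x.sndInit = y.sndInit ∧ x.sndTail = y.sndTail :=
    append_cons_inj_of_notMem_left hx.notMem (hvertex ▸ hy.notMem)
      (hsnd.trans (by rw [snd, hvertex]))
  exact Crossing.ext hInit hInit' hvertex hTail hTail' hrest

end IsCanonical

theorem exists_isSeparated {S : Finset (List V)}
    (hinj : Set.InjOn List.getLast? (S : Set (List V))) {P P' Q Q' : List V} {v : V}
    (h : P ++ v :: Q ∈ S) (h' : P' ++ v :: Q' ∈ S)
    (hne : endKey (P ++ v :: Q) ≠ endKey (P' ++ v :: Q')) :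
    ∃ R, (mk P P' v Q Q' R).IsSeparated ∧ (mk P P' v Q Q' R).walks = S := by
  have hkey : ∀ {z z'}, z ∈ S → z' ∈ S → z ≠ z' → endKey z ≠ endKey z' :=
    fun hz hz' => mt fun h => hinj hz hz' (endKey_inj.1 h)
  refine ⟨(S.erase (P ++ v :: Q)).erase (P' ++ v :: Q'), ⟨hne, fun z hz => ?_, fun z hz => ?_⟩, ?_⟩
  · simp only [Finset.mem_erase] at hz
    exact hkey hz.2.2 h hz.2.1
  · simp only [Finset.mem_erase] at hz
    exact hkey hz.2.2 h' hz.1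
  · have hmem : P' ++ v :: Q' ∈ S.erase (P ++ v :: Q) :=
      Finset.mem_erase.2 ⟨fun h => hne (congrArg endKey h.symm), h'⟩
    change insert _ (insert _ _) = S
    exact (congrArg _ (Finset.insert_erase hmem)).trans (Finset.insert_erase h)

theorem exists_isCanonical {S : Finset (List V)} (hinj : Set.InjOn List.getLast? (S : Set (List V)))
    (h : ∃ w ∈ S, ∃ u ∈ loopErase w, OnLater S (endKey w) u) :
    ∃ x : Crossing V, x.IsCanonical ∧ x.walks = S := by
  obtain ⟨w, hw, hmin⟩ := Finset.exists_min_image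
    {w ∈ S | ∃ u ∈ loopErase w, OnLater S (endKey w) u} endKey
    (Finset.filter_nonempty_iff.2 h)
  rw [Finset.mem_filter] at hw
  obtain ⟨P, v, Q, rfl, hlast⟩ := exists_isLastHit hw.2
  obtain ⟨z, hz, hzmin⟩ := Finset.exists_min_image
    {z ∈ S | endKey (P ++ v :: Q) < endKey z ∧ v ∈ z} endKey
    (Finset.filter_nonempty_iff.2 hlast.hit)
  rw [Finset.mem_filter] at hz
  obtain ⟨hzS, hlt, hvz⟩ := hz
  obtain ⟨P', Q', rfl, hv⟩ := List.eq_append_cons_of_mem hvz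
  obtain ⟨R, hsep, rfl⟩ := exists_isSeparated hinj hw.1 hzS hlt.ne
  exact ⟨_, {
    toIsSeparated := hsep
    lt := hlt
    lastHit := hlast
    notMem := hv
    least := fun z hz hlt hv => hzmin z (Finset.mem_filter.2 ⟨hz, hlt, hv⟩)
    before := fun z hz hlt u hu hlater =>
      hlt.not_ge (hmin z (Finset.mem_filter.2 ⟨hz, u, hu, hlater⟩)) }, rfl⟩

end Crossing

theorem sum_prod_edgeProd_eq_zero {A : Type*} [CommSemiring A] [CharP A 2] (f : V × V → A)
    {𝓕 : Finset (Finset (List V))}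
    (hhead : ∀ S ∈ 𝓕, Set.InjOn List.head? (S : Set (List V)))
    (hlast : ∀ S ∈ 𝓕, Set.InjOn List.getLast? (S : Set (List V)))
    (hcrossing : ∀ S ∈ 𝓕, ∃ w ∈ S, ∃ u ∈ loopErase w, OnLater S (endKey w) u)
    (hswap : ∀ x : Crossing V, x.IsSeparated → x.walks ∈ 𝓕 → x.swap.walks ∈ 𝓕) :
    ∑ S ∈ 𝓕, ∏ w ∈ S, edgeProd f w = 0 := by
  choose x hx hxS using fun S hS => Crossing.exists_isCanonical (hlast S hS) (hcrossing S hS)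
  have hmem : ∀ S (hS : S ∈ 𝓕), (x S hS).swap.walks ∈ 𝓕 := fun S hS =>
    hswap (x S hS) (hx S hS).toIsSeparated ((hxS S hS).symm ▸ hS)
  refine Finset.sum_involution (fun S hS => (x S hS).swap.walks) ?_ ?_ hmem ?_
  · intro S hS
    rw [(hx S hS).toIsSeparated.prod_edgeProd_swap, hxS S hS, CharTwo.add_self_eq_zero]
  · intro S hS _ hfixed
    have heq : x S hS = (x S hS).swap := (hx S hS).unique (hx S hS).swap
      ((hxS S hS).symm ▸ hlast S hS) ((hxS S hS).trans hfixed.symm)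
    have hfst_snd : (x S hS).fst = (x S hS).snd :=
      hhead S hS ((hxS S hS).subset Crossing.fst_mem_walks)
        ((hxS S hS).subset Crossing.snd_mem_walks)
        ((congrArg (fun y => y.fst.head?) heq).trans Crossing.head?_swap_fst)
    exact (hx S hS).fst_ne_snd (congrArg endKey hfst_snd)
  · intro S hS
    have hS' := hmem S hS
    have heq : x _ hS' = (x S hS).swap := (hx _ hS').unique (hx S hS).swap
      ((hxS _ hS').symm ▸ hlast _ hS') (hxS _ hS')
    rw [heq, Crossing.swap_swap, hxS S hS]

theorem pairwise_disjoint_loopErase {S : Finset (List V)}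
    (hlast : Set.InjOn List.getLast? (S : Set (List V)))
    (h : ¬ ∃ w ∈ S, ∃ u ∈ loopErase w, OnLater S (endKey w) u) :
    (S : Set (List V)).Pairwise fun w w' => (loopErase w).Disjoint (loopErase w') := by
  intro w hw w' hw' hne u hu hu'
  rcases lt_trichotomy (endKey w) (endKey w') with hlt | heq | hlt
  · exact h ⟨w, hw, u, hu, w', hw', hlt, (loopErase_sublist w').subset hu'⟩
  · exact hne (hlast hw hw' (endKey_inj.1 heq))
  · exact h ⟨w', hw', u, hu', w, hw, hlt, (loopErase_sublist w).subset hu⟩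

end Crossing

section Coefficient

/-- The multiplicity of each edge in a set of walks, i.e. the exponent of its monomial. -/
def edgeCount (S : Finset (List V)) : V × V →₀ ℕ :=
  ∑ w ∈ S, Multiset.toFinsupp (edgesOf w : Multiset (V × V))

theorem edgeCount_apply_ne_zero {S : Finset (List V)} {e : V × V} :
    edgeCount S e ≠ 0 ↔ ∃ w ∈ S, e ∈ edgesOf w := by
  rw [edgeCount, Finsupp.finsetSum_apply, Ne, Finset.sum_eq_zero_iff]
  simp [Multiset.toFinsupp_apply, List.count_eq_zero]

theorem edgeProd_X (A : Type*) [CommSemiring A] (w : List V) :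
    edgeProd (MvPolynomial.X : V × V → MvPolynomial (V × V) A) w =
      MvPolynomial.monomial (Multiset.toFinsupp (edgesOf w : Multiset (V × V))) 1 := by
  rw [edgeProd]
  induction edgesOf w with
  | nil => simp
  | cons e l ih =>
    rw [List.map_cons, List.prod_cons, ih, ← Multiset.cons_coe, ← Multiset.singleton_add, map_add,
      Multiset.toFinsupp_singleton, MvPolynomial.X, MvPolynomial.monomial_mul, one_mul]

theorem prod_edgeProd_X (A : Type*) [CommSemiring A] (S : Finset (List V)) :
    ∏ w ∈ S, edgeProd (MvPolynomial.X : V × V → MvPolynomial (V × V) A) w =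
      MvPolynomial.monomial (edgeCount S) 1 := by
  simp only [edgeProd_X, edgeCount, MvPolynomial.monomial_sum_one]

theorem sum_prod_edgeProd_X_ne_zero (A : Type*) [CommSemiring A] [Nontrivial A]
    {𝓕 : Finset (Finset (List V))} {D : Finset (List V)} (hD : D ∈ 𝓕)
    (hunique : ∀ S ∈ 𝓕, edgeCount S = edgeCount D → S = D) :
    ∑ S ∈ 𝓕, ∏ w ∈ S, edgeProd (MvPolynomial.X : V × V → MvPolynomial (V × V) A) w ≠ 0 := by
  have hcoeff : MvPolynomial.coeff (edgeCount D)
      (∑ S ∈ 𝓕, ∏ w ∈ S, edgeProd (MvPolynomial.X : V × V → MvPolynomial (V × V) A) w) = 1 := by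
    simp only [prod_edgeProd_X, MvPolynomial.coeff_sum, MvPolynomial.coeff_monomial]
    rw [Finset.sum_eq_single_of_mem D hD fun S hS hne => if_neg (mt (hunique S hS) hne), if_pos rfl]
  intro hzero
  rw [hzero, MvPolynomial.coeff_zero] at hcoeff
  exact zero_ne_one hcoeff

theorem rightUnique_exists_mem_edgesOf {S : Finset (List V)} (hnodup : ∀ w ∈ S, w.Nodup)
    (hdisj : (S : Set (List V)).Pairwise List.Disjoint) :
    Relator.RightUnique fun u v => ∃ w ∈ S, (u, v) ∈ edgesOf w := by
  rintro u v v' ⟨w, hw, h⟩ ⟨w', hw', h'⟩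
  obtain rfl : w = w' := hdisj.eq hw hw' fun hww' =>
    hww' (fst_mem_of_mem_edgesOf h) (fst_mem_of_mem_edgesOf (e := (u, v')) h')
  exact rightUnique_mem_edgesOf (hnodup w hw) h h'

theorem tail_eq_of_isChain {R : V → V → Prop} (hR : Relator.RightUnique R) {Y : Set V}
    (hY : ∀ u v, R u v → u ∉ Y) {a : V} {l l' : List V} (h : (a :: l).IsChain R)
    (h' : (a :: l').IsChain R) (hb : ∃ b ∈ (a :: l).getLast?, b ∈ Y)
    (hb' : ∃ b ∈ (a :: l').getLast?, b ∈ Y) : l = l' := by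
  induction l generalizing a l' with
  | nil =>
    have ha : a ∈ Y := by simpa using hb
    cases l' with
    | nil => rfl
    | cons b' l' => exact absurd ha (hY a b' h'.rel)
  | cons b l ih =>
    cases l' with
    | nil => exact absurd (by simpa using hb') (hY a b h.rel)
    | cons b' l' =>
      obtain rfl := hR h.rel h'.rel
      rw [ih h.of_cons h'.of_cons (by simpa using hb) (by simpa using hb')]

variable {E : V → V → Prop} {X Y : Set V} {k : ℕ} {S S' : Finset (List V)}

theorem IsWalk.mem_of_edgesOf_subset (hXY : Disjoint X Y) (hS : ∀ w ∈ S, IsWalk E X Y w)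
    (hnodup : ∀ w ∈ S, w.Nodup) (hdisj : (S : Set (List V)).Pairwise List.Disjoint) {w' : List V}
    (hw' : IsWalk E X Y w') (hedges : ∀ e ∈ edgesOf w', ∃ w ∈ S, e ∈ edgesOf w) : w' ∈ S := by
  have hstep : ∀ w ∈ S, ∀ e ∈ edgesOf w, WalkStep E X Y e.1 e.2 := fun w hw =>
    isChain_iff_forall_mem_edgesOf.1 ((isWalk_iff hXY).1 (hS w hw)).2.2
  obtain ⟨hx, hend', -⟩ := (isWalk_iff hXY).1 hw'
  obtain ⟨x, b, l', rfl⟩ : ∃ x b l', w' = x :: b :: l' := by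
    have hlength := hw'.1
    rcases w' with _ | ⟨x, _ | ⟨b, l'⟩⟩ <;> simp_all
  obtain ⟨w, hw, hxb⟩ := hedges (x, b) List.mem_cons_self
  obtain ⟨-, hend, hchain⟩ := (isWalk_iff hXY).1 (hS w hw)
  obtain ⟨l, rfl⟩ : ∃ l, w = x :: l := by
    have hxX : x ∈ X := by simpa using hx
    have hxw : x ∈ w := fst_mem_of_mem_edgesOf hxb
    rcases w with _ | ⟨a, l⟩
    · exact absurd hxw List.not_mem_nil
    · rcases List.mem_cons.1 hxw with rfl | hxl
      · exact ⟨l, rfl⟩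
      · exact absurd hxX ((isChain_walkStep_iff.1 hchain).2.2 x hxl)
  have htail : l = b :: l' := tail_eq_of_isChain (rightUnique_exists_mem_edgesOf hnodup hdisj)
    (fun u v ⟨z, hz, huv⟩ => (hstep z hz _ huv).2.1)
    (isChain_iff_forall_mem_edgesOf.2 fun e he => ⟨_, hw, he⟩)
    (isChain_iff_forall_mem_edgesOf.2 hedges) hend hend'
  exact htail ▸ hw

theorem ProperSet.eq_of_edgeCount_eq (hXY : Disjoint X Y) (hS : ProperSet E X Y k S)
    (hS' : ProperSet E X Y k S') (hnodup : ∀ w ∈ S, w.Nodup)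
    (hdisj : (S : Set (List V)).Pairwise List.Disjoint) (h : edgeCount S' = edgeCount S) :
    S' = S := by
  refine Finset.eq_of_subset_of_card_le (fun w' hw' => ?_) (hS.1.trans hS'.1.symm).le
  refine (hS'.2.1 w' hw').mem_of_edgesOf_subset hXY hS.2.1 hnodup hdisj fun e he => ?_
  rw [← edgeCount_apply_ne_zero, ← h, edgeCount_apply_ne_zero]
  exact ⟨w', hw', he⟩

end Coefficient

theorem cost_walk_polynomial_ne_zero_iff_general {M : Type*} [AddCommMonoid M] [PartialOrder M]
    [IsOrderedAddMonoid M] {E : V → V → Prop} {X Y : Set V} (hXY : Disjoint X Y) {k : ℕ}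
    {c : V × V → M} (hc : ∀ u v, E u v → 0 ≤ c (u, v)) {U : M} (A : Type*) [CommSemiring A]
    [CharP A 2]
    (hfin : {S | ProperSet E X Y k S ∧ ∑ w ∈ S, edgeSum c w ≤ U}.Finite) :
    ∑ S ∈ hfin.toFinset,
        ∏ w ∈ S, edgeProd (MvPolynomial.X : V × V → MvPolynomial (V × V) A) w ≠ 0 ↔
      ∃ S, ProperSet E X Y k S ∧ ∑ w ∈ S, edgeSum c w ≤ U ∧
        (S : Set (List V)).Pairwise List.Disjoint := by
  constructor
  · contrapose!
    intro hnone
    refine sum_prod_edgeProd_eq_zero _ ?_ ?_ ?_ ?_ <;> simp only [Set.Finite.mem_toFinset]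
    · exact fun S hS => hS.1.injOn_head?
    · exact fun S hS => hS.1.injOn_getLast?
    · intro S hS
      by_contra hdisj
      exact hnone _ (hS.1.image_loopErase hXY) ((hS.1.sum_image_loopErase_le hc).trans hS.2)
        (pairwise_disjoint_image_loopErase (pairwise_disjoint_loopErase hS.1.injOn_getLast? hdisj))
    · exact fun x hx hS => ⟨hx.properSet_swap hXY hS.1, (hx.sum_edgeSum_swap c).trans_le hS.2⟩
  · rintro ⟨S, hS, hSU, hdisj⟩
    have : Nontrivial A := CharP.nontrivial_of_char_ne_one (v := 2) (by decide)
    have hD := hS.image_loopErase hXY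
    have hDdisj := pairwise_disjoint_image_loopErase <| hdisj.imp fun w w' h u hu hu' =>
      h ((loopErase_sublist w).subset hu) ((loopErase_sublist w').subset hu')
    have hDnodup : ∀ w ∈ S.image loopErase, w.Nodup :=
      Finset.forall_mem_image.2 fun w _ => nodup_loopErase w
    exact sum_prod_edgeProd_X_ne_zero A
      (hfin.mem_toFinset.2 ⟨hD, (hS.sum_image_loopErase_le hc).trans hSU⟩) fun S' hS' =>
        hD.eq_of_edgeCount_eq hXY (hfin.mem_toFinset.1 hS').1 hDnodup hDdisj

/-- Over a field of characteristic two, the polynomial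
`CQ = ∑_{S} ∏_{W ∈ S} M_W`, the sum ranging over all proper sets `S` of `k`
walks of total cost at most `U`, is nonzero iff there is a proper set of `k`
pairwise vertex-disjoint walks of total cost at most `U`. -/
theorem cost_walk_polynomial_ne_zero_iff (E : V → V → Prop) (X Y : Set V)
    (hXY : Disjoint X Y) (k : ℕ) (C : ℕ) (c : V × V → ℕ)
    (hc : ∀ u v, E u v → c (u, v) ∈ Finset.Icc 1 C)
    (U : ℕ) (F : Type*) [Field F] [CharP F 2]
    (fam : Set (Finset (List V)))
    (hfam : fam = {S | ProperSet E X Y k S ∧ (∑ w ∈ S, walkCost c w) ≤ U})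
    (hfin : fam.Finite) :
    (∑ S ∈ hfin.toFinset, ∏ w ∈ S, walkMonomial F w) ≠ 0 ↔
      ∃ S : Finset (List V), ProperSet E X Y k S ∧
        (∑ w ∈ S, walkCost c w) ≤ U ∧
        ∀ w ∈ S, ∀ w' ∈ S, w ≠ w' → ∀ v, v ∈ w → v ∉ w' := by
  subst hfam
  exact cost_walk_polynomial_ne_zero_iff_general hXY (fun _ _ _ => Nat.zero_le _) F hfin

end
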